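/- arXiv:2206.00618 — 2 statements merged into one kernel-verified Lean document; each statement's English description precedes it below -/
import Mathlib

section
/- Consider the QCQP problem. Assume there exists γ' ∈ ℝᵐ with γ'_k ≥ 0 for all k, γ' ≠ 0, such that A_J + Σ_{k=1}^m γ'_k A_k is positive semidefinite. Let x* be a global minimizer of the QCQP, set f_0(x) := J(x) − J(x*), and assume the set Ω₀ associated with f_0, f_1, …, f_m is convex. Then there exists (γ_0, γ_1, …, γ_m) ∈ ℝ^{m+1} with all γ_k ≥ 0, not all zero, such that: (i) (γ_0 A_J + Σ_{k=1}^m γ_k A_k) x* + (γ_0 b_J + Σ_{k=1}^m γ_k b_k) = 0; (ii) γ_k f_k(x*) = 0 for k = 1, …, m; (iii) γ_0 A_J + Σ_{k=1}^m γ_k A_k is positive semidefinite. -/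
open Matrix

/-!
Since `x*` is a global minimizer, the origin does not belong to `Ω₀`. This set is open and upward
closed, so when it is convex a hyperplane separates it from the origin and the normal vector `γ` of
the hyperplane can be taken nonnegative. The aggregated quadratic function `∑ γ_k f_k` is then
nonnegative on the whole space. At `x*` all its terms are nonpositive, so they all vanish; hence
`x*` is an unconstrained global minimizer of the aggregate, and the first and second order
conditions there are exactly the asserted ones.
-/

section StrictUpperImage

variable {ι E : Type*}

/-- The set `Ω₀ = f(E) + int ℝ₊^ι` of strict upper bounds of values of the vector function
`f = (f i)_{i ∈ ι}`, written without the Minkowski sum. -/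
def strictUpperImage (f : ι → E → ℝ) : Set (ι → ℝ) :=
  {v | ∃ x, ∀ i, f i x < v i}

theorem isUpperSet_strictUpperImage (f : ι → E → ℝ) : IsUpperSet (strictUpperImage f) :=
  fun _ _ hvw ⟨x, hx⟩ ↦ ⟨x, fun i ↦ (hx i).trans_le (hvw i)⟩

theorem isOpen_strictUpperImage [Finite ι] (f : ι → E → ℝ) : IsOpen (strictUpperImage f) := by
  simp only [strictUpperImage, Set.ofPred_exists, Set.ofPred_forall]
  exact isOpen_iUnion fun _ ↦ isOpen_iInter_of_finite fun i ↦
    isOpen_lt continuous_const (continuous_apply i)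

theorem nonempty_strictUpperImage [Nonempty E] (f : ι → E → ℝ) :
    (strictUpperImage f).Nonempty :=
  let ⟨x⟩ := ‹Nonempty E›
  ⟨fun i ↦ f i x + 1, x, fun _ ↦ lt_add_one _⟩

end StrictUpperImage

section Separation

variable {ι : Type*} [Fintype ι]

theorem nonneg_of_dotProduct_pos_of_isUpperSet {s : Set (ι → ℝ)} (hs : IsUpperSet s)
    (hne : s.Nonempty) {γ : ι → ℝ} (hγ : ∀ v ∈ s, 0 < γ ⬝ᵥ v) : 0 ≤ γ := by
  classical
  obtain ⟨v, hv⟩ := hne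
  intro i
  by_contra! hi
  -- Moving from `v` by this much in direction `i` lands on the hyperplane `γ ⬝ᵥ w = 0`.
  let t := -(γ ⬝ᵥ v) / γ i
  have ht : 0 ≤ t := div_nonneg_of_nonpos (neg_nonpos.2 (hγ v hv).le) hi.le
  have hmem : v + Pi.single i t ∈ s :=
    hs (le_add_of_nonneg_right (Pi.single_nonneg.2 ht)) hv
  have hzero : γ ⬝ᵥ (v + Pi.single i t) = 0 := by
    rw [dotProduct_add, dotProduct_single, mul_div_cancel₀ _ hi.ne, add_neg_cancel]
  exact (hγ _ hmem).ne' hzero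

theorem exists_nonneg_dotProduct_pos_of_isUpperSet {s : Set (ι → ℝ)} (hconv : Convex ℝ s)
    (hopen : IsOpen s) (hupper : IsUpperSet s) (hne : s.Nonempty) (h0 : 0 ∉ s) :
    ∃ γ : ι → ℝ, 0 ≤ γ ∧ γ ≠ 0 ∧ ∀ v ∈ s, 0 < γ ⬝ᵥ v := by
  classical
  obtain ⟨φ, hφ⟩ := geometric_hahn_banach_point_open hconv hopen h0
  let γ := (dotProductEquiv ℝ ι).symm φ
  have hγφ (v : ι → ℝ) : γ ⬝ᵥ v = φ v :=
    LinearMap.congr_fun ((dotProductEquiv ℝ ι).apply_symm_apply (φ : Module.Dual ℝ (ι → ℝ))) v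
  have hpos : ∀ v ∈ s, 0 < γ ⬝ᵥ v := fun v hv ↦ by
    simpa only [hγφ, map_zero] using hφ v hv
  refine ⟨γ, nonneg_of_dotProduct_pos_of_isUpperSet hupper hne hpos, fun hγ ↦ ?_, hpos⟩
  obtain ⟨v, hv⟩ := hne
  simpa only [hγ, zero_dotProduct, lt_irrefl] using hpos v hv

theorem exists_nonneg_sum_mul_nonneg_of_convex_strictUpperImage {E : Type*} [Nonempty E]
    {f : ι → E → ℝ} (hconv : Convex ℝ (strictUpperImage f)) (hf : ∀ x, ∃ i, 0 ≤ f i x) :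
    ∃ γ : ι → ℝ, 0 ≤ γ ∧ γ ≠ 0 ∧ ∀ x, 0 ≤ ∑ i, γ i * f i x := by
  have h0 : 0 ∉ strictUpperImage f := fun ⟨x, hx⟩ ↦
    let ⟨i, hi⟩ := hf x
    (hx i).not_ge hi
  obtain ⟨γ, hγ, hγ0, hpos⟩ := exists_nonneg_dotProduct_pos_of_isUpperSet hconv
    (isOpen_strictUpperImage f) (isUpperSet_strictUpperImage f) (nonempty_strictUpperImage f) h0
  refine ⟨γ, hγ, hγ0, fun x ↦ ?_⟩
  have hshift (ε : ℝ) (hε : 0 < ε) : 0 ≤ ∑ i, γ i * (f i x + ε) :=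
    (hpos (fun i ↦ f i x + ε) ⟨x, fun _ ↦ lt_add_of_pos_right _ hε⟩).le
  have hlim : Filter.Tendsto (fun ε ↦ ∑ i, γ i * (f i x + ε)) (nhdsWithin 0 (Set.Ioi 0))
      (nhds (∑ i, γ i * f i x)) := by
    have hcont : Continuous fun ε : ℝ ↦ ∑ i, γ i * (f i x + ε) := by fun_prop
    simpa only [add_zero] using (hcont.tendsto 0).mono_left nhdsWithin_le_nhds
  exact ge_of_tendsto hlim (eventually_mem_nhdsWithin.mono hshift)

end Separation

theorem mul_eq_zero_of_sum_mul_nonneg {ι R : Type*} [Fintype ι] [Ring R] [PartialOrder R]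
    [IsOrderedRing R] {γ u : ι → R} (hγ : 0 ≤ γ) (hu : u ≤ 0) (hsum : 0 ≤ ∑ i, γ i * u i)
    (i : ι) : γ i * u i = 0 := by
  have hterm : ∀ j ∈ Finset.univ, γ j * u j ≤ 0 := fun j _ ↦
    mul_nonpos_of_nonneg_of_nonpos (hγ j) (hu j)
  have hsum0 : ∑ j, γ j * u j = 0 := (Finset.sum_nonpos hterm).antisymm hsum
  exact (Finset.sum_eq_zero_iff_of_nonpos hterm).1 hsum0 i (Finset.mem_univ i)

section QuadFun

variable {n R : Type*} [Fintype n]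

/-- The inhomogeneous quadratic function `x ↦ xᵀ A x + 2 bᵀ x + c`, the shape of the objective
and the constraints of a QCQP. With the factor `2`, its half-gradient is `A x + b` for symmetric
`A`. -/
def quadFun [CommSemiring R] (A : Matrix n n R) (b : n → R) (c : R) (x : n → R) : R :=
  x ⬝ᵥ A *ᵥ x + 2 * (b ⬝ᵥ x) + c

theorem quadFun_const_sub [CommRing R] (A : Matrix n n R) (b : n → R) (c d : R) (x : n → R) :
    quadFun A b (c - d) x = quadFun A b c x - d :=
  (add_sub_assoc _ c d).symm

theorem quadFun_sum_smul [CommSemiring R] {ι : Type*} [Fintype ι] (γ : ι → R)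
    (A : ι → Matrix n n R) (b : ι → n → R) (c : ι → R) (x : n → R) :
    quadFun (∑ i, γ i • A i) (∑ i, γ i • b i) (∑ i, γ i * c i) x =
      ∑ i, γ i * quadFun (A i) (b i) (c i) x := by
  simp only [quadFun, sum_mulVec, smul_mulVec, dotProduct_sum, sum_dotProduct, dotProduct_smul,
    smul_dotProduct, smul_eq_mul, Finset.mul_sum, mul_add, Finset.sum_add_distrib,
    mul_left_comm (2 : R)]

theorem quadFun_add_smul [CommSemiring R] {A : Matrix n n R} (hA : A.IsSymm) (b : n → R) (c : R)
    (x y : n → R) (t : R) :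
    quadFun A b c (x + t • y) =
      quadFun A b c x + (y ⬝ᵥ A *ᵥ y * (t * t) + 2 * (y ⬝ᵥ (A *ᵥ x + b)) * t) := by
  have hsymm : x ⬝ᵥ A *ᵥ y = y ⬝ᵥ A *ᵥ x := by
    rw [← dotProduct_transpose_mulVec, hA.eq]
  simp only [quadFun, mulVec_add, mulVec_smul, dotProduct_add, add_dotProduct, dotProduct_smul,
    smul_dotProduct, smul_eq_mul, hsymm, dotProduct_comm y b]
  ring

section Minimizer

variable [Field R] [LinearOrder R] [IsStrictOrderedRing R] {A : Matrix n n R} {b : n → R} {c : R}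
  {x : n → R}

theorem quadFun_increment_nonneg_of_forall_le (hA : A.IsSymm)
    (hmin : ∀ y, quadFun A b c x ≤ quadFun A b c y) (y : n → R) (t : R) :
    0 ≤ y ⬝ᵥ A *ᵥ y * (t * t) + 2 * (y ⬝ᵥ (A *ᵥ x + b)) * t := by
  have h := hmin (x + t • y)
  rwa [quadFun_add_smul hA, le_add_iff_nonneg_right] at h

theorem mulVec_add_eq_zero_of_forall_quadFun_le (hA : A.IsSymm)
    (hmin : ∀ y, quadFun A b c x ≤ quadFun A b c y) : A *ᵥ x + b = 0 := by
  let g := A *ᵥ x + b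
  have hdiscrim : discrim (g ⬝ᵥ A *ᵥ g) (2 * (g ⬝ᵥ g)) 0 ≤ 0 := discrim_le_zero fun t ↦ by
    simpa only [add_zero] using quadFun_increment_nonneg_of_forall_le hA hmin g t
  have hsq : (2 * (g ⬝ᵥ g)) ^ 2 ≤ 0 := by
    simpa only [discrim, mul_zero, sub_zero] using hdiscrim
  have hg : g ⬝ᵥ g = 0 := by
    simpa using (sq_nonpos_iff _).1 hsq
  exact dotProduct_self_eq_zero.1 hg

theorem posSemidef_of_forall_quadFun_le [StarRing R] [TrivialStar R] (hA : A.IsSymm)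
    (hmin : ∀ y, quadFun A b c x ≤ quadFun A b c y) : A.PosSemidef := by
  refine .of_dotProduct_mulVec_nonneg (isHermitian_iff_isSymm.2 hA) fun y ↦ ?_
  have hpos := quadFun_increment_nonneg_of_forall_le hA hmin y 1
  have hneg := quadFun_increment_nonneg_of_forall_le hA hmin y (-1)
  rw [star_trivial]
  linarith

end Minimizer

end QuadFun

theorem isSymm_sum_smul {ι n R : Type*} [Fintype ι] [Semiring R] (γ : ι → R)
    {A : ι → Matrix n n R} (hA : ∀ i, (A i).IsSymm) : (∑ i, γ i • A i).IsSymm := by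
  simp only [IsSymm, transpose_sum, transpose_smul, (hA _).eq]

theorem exists_fritzJohn_multipliers {ι n : Type*} [Fintype ι] [Fintype n]
    {A : ι → Matrix n n ℝ} (hA : ∀ i, (A i).IsSymm) {b : ι → n → ℝ} {c : ι → ℝ} {x : n → ℝ}
    (hx : ∀ i, quadFun (A i) (b i) (c i) x ≤ 0)
    (hopt : ∀ y, ∃ i, 0 ≤ quadFun (A i) (b i) (c i) y)
    (hconv : Convex ℝ (strictUpperImage fun i ↦ quadFun (A i) (b i) (c i))) :
    ∃ γ : ι → ℝ, 0 ≤ γ ∧ γ ≠ 0 ∧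
      (∑ i, γ i • A i) *ᵥ x + ∑ i, γ i • b i = 0 ∧
      (∀ i, γ i * quadFun (A i) (b i) (c i) x = 0) ∧
      (∑ i, γ i • A i).PosSemidef := by
  obtain ⟨γ, hγ, hγ0, hnonneg⟩ :=
    exists_nonneg_sum_mul_nonneg_of_convex_strictUpperImage hconv hopt
  have hslack := mul_eq_zero_of_sum_mul_nonneg hγ hx (hnonneg x)
  have hmin (y : n → ℝ) : quadFun (∑ i, γ i • A i) (∑ i, γ i • b i) (∑ i, γ i * c i) x ≤
      quadFun (∑ i, γ i • A i) (∑ i, γ i • b i) (∑ i, γ i * c i) y := by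
    simpa only [quadFun_sum_smul, hslack, Finset.sum_const_zero] using hnonneg y
  have hsymm := isSymm_sum_smul γ hA
  exact ⟨γ, hγ, hγ0, mulVec_add_eq_zero_of_forall_quadFun_le hsymm hmin, hslack,
    posSemidef_of_forall_quadFun_le hsymm hmin⟩

theorem stmt_2_general {n : Type*} [Fintype n] {m : ℕ} {AJ : Matrix n n ℝ}
    {A : Fin m → Matrix n n ℝ} (hAJ : AJ.IsSymm) (hA : ∀ k, (A k).IsSymm)
    {bJ : n → ℝ} {b : Fin m → n → ℝ} {cJ : ℝ} {c : Fin m → ℝ}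
    {J : (n → ℝ) → ℝ} {f : Fin m → (n → ℝ) → ℝ}
    (hJ : J = quadFun AJ bJ cJ) (hf : f = fun k ↦ quadFun (A k) (b k) (c k))
    {xstar : n → ℝ} (hfeas : ∀ k, f k xstar ≤ 0)
    (hmin : ∀ x, (∀ k, f k x ≤ 0) → J xstar ≤ J x)
    (hΩ : Convex ℝ {v : Fin (m + 1) → ℝ | ∃ x,
      J x - J xstar < v 0 ∧ ∀ k : Fin m, f k x < v k.succ}) :
    ∃ (γ0 : ℝ) (γ : Fin m → ℝ), 0 ≤ γ0 ∧ (∀ k, 0 ≤ γ k) ∧ ¬(γ0 = 0 ∧ γ = 0) ∧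
      (γ0 • AJ + ∑ k, γ k • A k) *ᵥ xstar + (γ0 • bJ + ∑ k, γ k • b k) = 0 ∧
      (∀ k, γ k * f k xstar = 0) ∧
      (γ0 • AJ + ∑ k, γ k • A k).PosSemidef := by
  subst hf
  let A' : Fin (m + 1) → Matrix n n ℝ := Fin.cons AJ A
  let b' : Fin (m + 1) → n → ℝ := Fin.cons bJ b
  let c' : Fin (m + 1) → ℝ := Fin.cons (cJ - J xstar) c
  have hobj (x : n → ℝ) : quadFun AJ bJ (cJ - J xstar) x = J x - J xstar := by
    rw [quadFun_const_sub, hJ]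
  have hsymm : ∀ i, (A' i).IsSymm := Fin.cases hAJ hA
  have hnonpos : ∀ i, quadFun (A' i) (b' i) (c' i) xstar ≤ 0 :=
    Fin.cases ((hobj xstar).trans (sub_self _)).le hfeas
  have hopt (x : n → ℝ) : ∃ i, 0 ≤ quadFun (A' i) (b' i) (c' i) x := by
    by_contra! hneg
    have hx := hmin x fun k ↦ (hneg k.succ).le
    exact (sub_nonneg.2 hx).not_gt ((hobj x).symm.trans_lt (hneg 0))
  have hconv : Convex ℝ (strictUpperImage fun i ↦ quadFun (A' i) (b' i) (c' i)) := by
    simpa [strictUpperImage, Fin.forall_fin_succ, A', b', c', hobj] using hΩ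
  obtain ⟨γ, hγ, hγ0, hstat, hslack, hpsd⟩ := exists_fritzJohn_multipliers hsymm hnonpos hopt hconv
  rw [Fin.sum_univ_succ, Fin.sum_univ_succ] at hstat
  rw [Fin.sum_univ_succ] at hpsd
  exact ⟨γ 0, fun k ↦ γ k.succ, hγ 0, fun k ↦ hγ k.succ,
    fun ⟨h0, hsucc⟩ ↦ hγ0 (funext (Fin.cases h0 (congrFun hsucc))),
    hstat, fun k ↦ hslack k.succ, hpsd⟩

/-- Fritz-John necessary conditions for a global minimizer of a general QCQP,
assuming a nonzero nonnegative `γ'` making `A_J + ∑ γ'_k A_k` PSD and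
convexity of the set Ω₀ associated with `f₀ := J - J x*` and `f₁, …, f_m`. -/
theorem stmt_2 (n m : ℕ)
    (AJ : Matrix (Fin n) (Fin n) ℝ) (A : Fin m → Matrix (Fin n) (Fin n) ℝ)
    (hAJ : AJ.IsSymm) (hA : ∀ k, (A k).IsSymm)
    (bJ : Fin n → ℝ) (b : Fin m → Fin n → ℝ) (cJ : ℝ) (c : Fin m → ℝ)
    (J : (Fin n → ℝ) → ℝ) (f : Fin m → (Fin n → ℝ) → ℝ)
    (hJ : ∀ x, J x = x ⬝ᵥ AJ.mulVec x + 2 * (bJ ⬝ᵥ x) + cJ)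
    (hf : ∀ k x, f k x = x ⬝ᵥ (A k).mulVec x + 2 * (b k ⬝ᵥ x) + c k)
    (hγ' : ∃ γ' : Fin m → ℝ, (∀ k, 0 ≤ γ' k) ∧ γ' ≠ 0 ∧
      (AJ + ∑ k, γ' k • A k).PosSemidef)
    (xstar : Fin n → ℝ)
    (hfeas : ∀ k, f k xstar ≤ 0)
    (hmin : ∀ x : Fin n → ℝ, (∀ k, f k x ≤ 0) → J xstar ≤ J x)
    (hΩ : Convex ℝ {v : Fin (m + 1) → ℝ | ∃ x : Fin n → ℝ,
      J x - J xstar < v 0 ∧ ∀ k : Fin m, f k x < v k.succ}) :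
    ∃ (γ0 : ℝ) (γ : Fin m → ℝ), 0 ≤ γ0 ∧ (∀ k, 0 ≤ γ k) ∧ ¬(γ0 = 0 ∧ γ = 0) ∧
      (γ0 • AJ + ∑ k, γ k • A k).mulVec xstar + (γ0 • bJ + ∑ k, γ k • b k) = 0 ∧
      (∀ k, γ k * f k xstar = 0) ∧
      (γ0 • AJ + ∑ k, γ k • A k).PosSemidef := by
  exact stmt_2_general hAJ hA (funext hJ) (funext₂ hf) hfeas hmin hΩ
end

section
/- Consider the S-QCQP problem with m + 1 < n. Assume a global minimizer of the S-QCQP exists, assume there exists γ' ∈ ℝᵐ with γ'_k ≥ 0 for all k, γ' ≠ 0, such that a_J + Σ_{k=1}^m γ'_k a_k ≥ 0, and assume the Slater condition: there exists x₀ ∈ ℝⁿ with f_k(x₀) < 0 for all k = 1, …, m. Then a feasible point x* is a global minimizer of the S-QCQP if and only if there exist multipliers γ_1, …, γ_m ≥ 0 such that: (i) (a_J + Σ_{k=1}^m γ_k a_k) x* + (b_J + Σ_{k=1}^m γ_k b_k) = 0; (ii) γ_k f_k(x*) = 0 for k = 1, …, m; (iii) a_J + Σ_{k=1}^m γ_k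 a_k ≥ 0. -/
open Matrix

/-!
Assemble the objective and the constraints into one map `F x = ‖x‖² • α + L x + w` with `L` linear.
When the domain has at least as many dimensions as `F` has components, `τ • α + L u = 0` for some
`(τ, u) ≠ 0`. If `u = 0` then `α = 0` and `F` is affine. Otherwise moving along `u` changes `F` only
by a multiple of `α` that is quadratic in the step, so a convex combination of `F x` and `F y` is
attained on the line in direction `u` through the same combination of `x` and `y`. Hence `F` has
convex range although its components need not be convex, and separating this range from the open
negative orthant gives Lagrange multipliers without a duality gap. The Lagrangian is again a
quadratic with scalar Hessian, and such a function is globally minimal exactly at its critical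
points, provided its curvature is nonnegative.
-/

open Set Module
open scoped InnerProductSpace

section Multipliers

variable {κ ι X : Type*} [Fintype κ] [Fintype ι]

theorem nonneg_of_forall_sum_mul_le {l : κ → ℝ} {u : ℝ}
    (hu : ∀ z : κ → ℝ, (∀ k, z k ≤ 0) → ∑ k, l k * z k ≤ u) (k : κ) : 0 ≤ l k := by
  classical
  by_contra! hk
  have hu₀ : 0 ≤ u := by simpa using hu 0 fun _ => le_rfl
  have ht : (u + 1) / l k ≤ 0 := div_nonpos_of_nonneg_of_nonpos (by positivity) hk.le
  have hle := hu (Pi.single k ((u + 1) / l k)) (Pi.single_nonpos.2 ht)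
  simp only [Pi.single_apply, mul_ite, mul_zero, Finset.sum_ite_eq', Finset.mem_univ, if_true,
    mul_div_cancel₀ _ hk.ne] at hle
  linarith

theorem exists_nonneg_ne_zero_forall_sum_mul_nonneg_of_convex {T : Set (κ → ℝ)} (hT : Convex ℝ T)
    (hne : T.Nonempty) (hneg : ∀ z ∈ T, ∃ k, 0 ≤ z k) :
    ∃ l : κ → ℝ, (∀ k, 0 ≤ l k) ∧ l ≠ 0 ∧ ∀ z ∈ T, 0 ≤ ∑ k, l k * z k := by
  classical
  let S : Set (κ → ℝ) := univ.pi fun _ => Iio 0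
  have hS_convex : Convex ℝ S := convex_pi fun _ _ => convex_Iio 0
  have hS_open : IsOpen S := isOpen_set_pi finite_univ fun _ _ => isOpen_Iio
  have hST : Disjoint S T := disjoint_left.2 fun z hzS hzT =>
    let ⟨k, hk⟩ := hneg z hzT
    (hzS k (mem_univ k)).not_ge hk
  obtain ⟨φ, u, hφS, hφT⟩ := geometric_hahn_banach_open hS_convex hS_open hT hST
  let l : κ → ℝ := fun k => φ fun j => if k = j then 1 else 0
  have hφ (z : κ → ℝ) : φ z = ∑ k, l k * z k := by
    simpa [l, mul_comm] using LinearMap.pi_apply_eq_sum_univ φ.toLinearMap z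
  have hφ_closure (z : κ → ℝ) (hz : ∀ k, z k ≤ 0) : ∑ k, l k * z k ≤ u := by
    have hzS : z ∈ closure S := by
      simpa only [S, closure_pi_set, closure_Iio, mem_univ_pi, mem_Iic] using hz
    rw [← hφ]
    exact closure_minimal (fun y hy => (hφS y hy).le)
      (isClosed_le φ.continuous continuous_const) hzS
  have hu : 0 ≤ u := by simpa using hφ_closure 0 fun _ => le_rfl
  refine ⟨l, nonneg_of_forall_sum_mul_le hφ_closure, fun hl => ?_,
    fun z hz => hu.trans (hφ z ▸ hφT z hz)⟩
  obtain ⟨z, hz⟩ := hne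
  have hu_pos : 0 < u := by simpa [hφ, hl] using hφS (fun _ => -1) (by simp [S])
  have hu_nonpos : u ≤ 0 := by simpa [hφ, hl] using hφT z hz
  exact hu_nonpos.not_gt hu_pos

theorem exists_multipliers_of_convex_range {g : X → ℝ} {f : ι → X → ℝ}
    (hconv : Convex ℝ (range fun x (o : Option ι) => o.elim (g x) (f · x)))
    (hslater : ∃ x, ∀ k, f k x < 0) (hg : ∀ x, (∀ k, f k x ≤ 0) → 0 ≤ g x) :
    ∃ γ : ι → ℝ, (∀ k, 0 ≤ γ k) ∧ ∀ x, 0 ≤ g x + ∑ k, γ k * f k x := by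
  obtain ⟨x₀, hx₀⟩ := hslater
  obtain ⟨l, hl_nonneg, hl_ne, hl⟩ := exists_nonneg_ne_zero_forall_sum_mul_nonneg_of_convex hconv
    ⟨_, x₀, rfl⟩ <| by
      rintro _ ⟨x, rfl⟩
      by_contra! hx
      exact (hx none).not_ge (hg x fun k => (hx (some k)).le)
  replace hl (x : X) : 0 ≤ l none * g x + ∑ k, l (some k) * f k x := by
    simpa [Fintype.sum_option] using hl _ ⟨x, rfl⟩
  -- At the Slater point a vanishing `l none` would force all the other multipliers to vanish.
  have hl_none : 0 < l none := by
    refine (hl_nonneg none).lt_of_ne' fun hl₀ => hl_ne ?_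
    have hterm (k : ι) (_ : k ∈ Finset.univ) : l (some k) * f k x₀ ≤ 0 :=
      mul_nonpos_of_nonneg_of_nonpos (hl_nonneg _) (hx₀ k).le
    have hsum : ∑ k, l (some k) * f k x₀ = 0 :=
      (Finset.sum_nonpos hterm).antisymm (by simpa [hl₀] using hl x₀)
    funext o
    cases o with
    | none => exact hl₀
    | some k =>
      have hk := (Finset.sum_eq_zero_iff_of_nonpos hterm).1 hsum k (Finset.mem_univ k)
      exact (mul_eq_zero.1 hk).resolve_right (hx₀ k).ne
  refine ⟨fun k => l (some k) / l none, fun k => div_nonneg (hl_nonneg _) hl_none.le, fun x => ?_⟩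
  have hdiv := div_nonneg (hl x) hl_none.le
  rwa [add_div, mul_div_cancel_left₀ _ hl_none.ne', Finset.sum_div,
    Finset.sum_congr rfl fun k _ => mul_div_right_comm _ _ _] at hdiv

theorem isMinOn_of_isMinOn_lagrangian {g : X → ℝ} {f : ι → X → ℝ} {γ : ι → ℝ} {x : X}
    (hγ : ∀ k, 0 ≤ γ k) (hcompl : ∀ k, γ k * f k x = 0)
    (hmin : IsMinOn (fun y => g y + ∑ k, γ k * f k y) univ x) :
    IsMinOn g {y | ∀ k, f k y ≤ 0} x := fun y hy =>
  calc
    g x = g x + ∑ k, γ k * f k x := by simp [hcompl]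
    _ ≤ g y + ∑ k, γ k * f k y := hmin (mem_univ y)
    _ ≤ g y := add_le_of_nonpos_right <| Finset.sum_nonpos fun k _ =>
      mul_nonpos_of_nonneg_of_nonpos (hγ k) (hy k)

theorem exists_isMinOn_lagrangian_of_isMinOn {g : X → ℝ} {f : ι → X → ℝ} {x : X}
    (hconv : Convex ℝ (range fun y (o : Option ι) => o.elim (g y) (f · y)))
    (hslater : ∃ x₀, ∀ k, f k x₀ < 0) (hfeas : ∀ k, f k x ≤ 0)
    (hmin : IsMinOn g {y | ∀ k, f k y ≤ 0} x) :
    ∃ γ : ι → ℝ, (∀ k, 0 ≤ γ k) ∧ (∀ k, γ k * f k x = 0) ∧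
      IsMinOn (fun y => g y + ∑ k, γ k * f k y) univ x := by
  have hconv_sub : Convex ℝ (range fun y (o : Option ι) => o.elim (g y - g x) (f · y)) := by
    have htranslate : (fun y (o : Option ι) => o.elim (g y - g x) (f · y)) =
        ((fun o : Option ι => o.elim (-g x) 0) + ·) ∘ fun y o => o.elim (g y) (f · y) := by
      ext y o
      cases o <;> simp [sub_eq_neg_add]
    rw [htranslate, range_comp]
    exact hconv.translate _
  obtain ⟨γ, hγ, hlag⟩ := exists_multipliers_of_convex_range hconv_sub hslater
    fun y hy => sub_nonneg.2 (hmin hy)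
  have hterm (k : ι) (_ : k ∈ Finset.univ) : γ k * f k x ≤ 0 :=
    mul_nonpos_of_nonneg_of_nonpos (hγ k) (hfeas k)
  have hsum : ∑ k, γ k * f k x = 0 :=
    (Finset.sum_nonpos hterm).antisymm (by simpa using hlag x)
  refine ⟨γ, hγ, fun k => (Finset.sum_eq_zero_iff_of_nonpos hterm).1 hsum k (Finset.mem_univ k),
    isMinOn_iff.2 fun y _ => ?_⟩
  linarith [hlag y]

end Multipliers

section ConvexRange

variable {E W : Type*} [NormedAddCommGroup E] [InnerProductSpace ℝ E] [AddCommGroup W] [Module ℝ W]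

theorem exists_norm_add_smul_sq_eq {p u : E} {ρ : ℝ} (τ : ℝ) (hu : u ≠ 0) (hp : ‖p‖ ^ 2 ≤ ρ) :
    ∃ r : ℝ, ‖p + r • u‖ ^ 2 = ρ + r * τ := by
  have hu_sq : 0 < ‖u‖ ^ 2 := by positivity
  have hdiscrim : 0 ≤ discrim (‖u‖ ^ 2) (2 * ⟪p, u⟫_ℝ - τ) (‖p‖ ^ 2 - ρ) := by
    rw [discrim]
    nlinarith [sq_nonneg (2 * ⟪p, u⟫_ℝ - τ), mul_nonneg hu_sq.le (sub_nonneg.2 hp)]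
  obtain ⟨r, hr⟩ := exists_quadratic_eq_zero hu_sq.ne' ⟨_, (Real.mul_self_sqrt hdiscrim).symm⟩
  refine ⟨r, ?_⟩
  rw [norm_add_sq_real, inner_smul_right, norm_smul, mul_pow, Real.norm_eq_abs, sq_abs]
  linear_combination hr

theorem norm_sq_convex_combination_le (x y : E) {s t : ℝ} (hs : 0 ≤ s) (ht : 0 ≤ t)
    (hst : s + t = 1) : ‖s • x + t • y‖ ^ 2 ≤ s * ‖x‖ ^ 2 + t * ‖y‖ ^ 2 :=
  ((convexOn_univ_norm (E := E)).pow (fun _ _ => norm_nonneg _) 2).2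
    (mem_univ x) (mem_univ y) hs ht hst

theorem convex_range_norm_sq_smul_add_of_direction {α : W} {L : E →ₗ[ℝ] W} (w : W) {u : E} {τ : ℝ}
    (hu : u ≠ 0) (hLu : τ • α + L u = 0) :
    Convex ℝ (range fun x => ‖x‖ ^ 2 • α + L x + w) := by
  rintro _ ⟨x, rfl⟩ _ ⟨y, rfl⟩ s t hs ht hst
  obtain ⟨r, hr⟩ := exists_norm_add_smul_sq_eq τ hu (norm_sq_convex_combination_le x y hs ht hst)
  refine ⟨s • x + t • y + r • u, ?_⟩
  obtain rfl : t = 1 - s := by linarith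
  simp only [hr, map_add, map_smul, eq_neg_of_add_eq_zero_right hLu]
  module

theorem exists_ne_zero_smul_add_eq_zero [FiniteDimensional ℝ W]
    (hdim : (finrank ℝ W : Cardinal) ≤ Module.rank ℝ E) (α : W) (L : E →ₗ[ℝ] W) :
    ∃ (τ : ℝ) (u : E), (τ, u) ≠ 0 ∧ τ • α + L u = 0 := by
  let M : ℝ × E →ₗ[ℝ] W := (LinearMap.toSpanSingleton ℝ W α).coprod L
  by_contra! hker
  have hM : Function.Injective M := (injective_iff_map_eq_zero M).2 fun p hp => by
    by_contra hp₀
    exact hker p.1 p.2 hp₀ (by simpa [M] using hp)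
  have : FiniteDimensional ℝ (ℝ × E) := .of_injective M hM
  have : FiniteDimensional ℝ E := .of_surjective (LinearMap.snd ℝ ℝ E) LinearMap.snd_surjective
  have hle : finrank ℝ (ℝ × E) ≤ finrank ℝ W := LinearMap.finrank_le_finrank_of_injective hM
  rw [← finrank_eq_rank, Nat.cast_le] at hdim
  rw [finrank_prod, finrank_self] at hle
  lia

theorem convex_range_norm_sq_smul_add [FiniteDimensional ℝ W]
    (hdim : (finrank ℝ W : Cardinal) ≤ Module.rank ℝ E) (α : W) (L : E →ₗ[ℝ] W) (w : W) :
    Convex ℝ (range fun x => ‖x‖ ^ 2 • α + L x + w) := by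
  obtain ⟨τ, u, hne, hLu⟩ := exists_ne_zero_smul_add_eq_zero hdim α L
  by_cases hu : u = 0
  · obtain rfl : α = 0 := by simp_all
    rintro _ ⟨x, rfl⟩ _ ⟨y, rfl⟩ s t - - hst
    refine ⟨s • x + t • y, ?_⟩
    obtain rfl : t = 1 - s := by linarith
    simp only [map_add, map_smul]
    module
  · exact convex_range_norm_sq_smul_add_of_direction w hu hLu

end ConvexRange

section SphericalQuadratic

variable {E ι : Type*} [NormedAddCommGroup E] [InnerProductSpace ℝ E]

/-- The quadratic function `a‖x‖² + 2⟪b, x⟫ + c`, whose Hessian is the scalar matrix `2a`: the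
common form of the objective and the constraints of an S-QCQP. -/
noncomputable def sphericalQuadratic (a : ℝ) (b : E) (c : ℝ) (x : E) : ℝ :=
  a * ‖x‖ ^ 2 + 2 * ⟪b, x⟫_ℝ + c

theorem sphericalQuadratic_toLp {n : ℕ} (a : ℝ) (b : Fin n → ℝ) (c : ℝ) (x : Fin n → ℝ) :
    sphericalQuadratic a (WithLp.toLp 2 b) c (WithLp.toLp 2 x) =
      a * (x ⬝ᵥ x) + 2 * (b ⬝ᵥ x) + c := by
  rw [sphericalQuadratic, ← real_inner_self_eq_norm_sq, EuclideanSpace.inner_toLp_toLp,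
    EuclideanSpace.inner_toLp_toLp, star_trivial, star_trivial, dotProduct_comm b x]

theorem sphericalQuadratic_add_sum [Fintype ι] (aJ : ℝ) (bJ : E) (cJ : ℝ) (a : ι → ℝ) (b : ι → E)
    (c γ : ι → ℝ) (x : E) :
    sphericalQuadratic aJ bJ cJ x + ∑ k, γ k * sphericalQuadratic (a k) (b k) (c k) x =
      sphericalQuadratic (aJ + ∑ k, γ k * a k) (bJ + ∑ k, γ k • b k) (cJ + ∑ k, γ k * c k) x := by
  simp only [sphericalQuadratic, mul_add, Finset.sum_add_distrib, add_mul, Finset.sum_mul,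
    inner_add_left, sum_inner, real_inner_smul_left, Finset.mul_sum, mul_assoc,
    mul_left_comm (γ _) 2]
  ring

theorem sphericalQuadratic_add (a : ℝ) (b : E) (c : ℝ) (x d : E) :
    sphericalQuadratic a b c (x + d) =
      sphericalQuadratic a b c x + 2 * ⟪a • x + b, d⟫_ℝ + a * ‖d‖ ^ 2 := by
  simp only [sphericalQuadratic, norm_add_sq_real, inner_add_left, inner_add_right,
    real_inner_smul_left]
  ring

theorem isMinOn_univ_sphericalQuadratic_iff [Nontrivial E] {a : ℝ} {b : E} {c : ℝ} {x : E} :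
    IsMinOn (sphericalQuadratic a b c) univ x ↔ a • x + b = 0 ∧ 0 ≤ a := by
  refine ⟨fun hmin => ?_, fun ⟨hcrit, ha⟩ => isMinOn_iff.2 fun y _ => ?_⟩
  · have hquad (d : E) (t : ℝ) :
        0 ≤ a * ‖d‖ ^ 2 * (t * t) + 2 * ⟪a • x + b, d⟫_ℝ * t + 0 := by
      have hle := isMinOn_iff.1 hmin (x + t • d) (mem_univ _)
      rw [sphericalQuadratic_add, inner_smul_right, norm_smul, mul_pow, Real.norm_eq_abs,
        sq_abs] at hle
      linarith
    have hgrad (d : E) : ⟪a • x + b, d⟫_ℝ = 0 := by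
      have hdiscrim := discrim_le_zero (hquad d)
      rw [discrim] at hdiscrim
      nlinarith
    refine ⟨inner_self_eq_zero.1 (hgrad _), ?_⟩
    obtain ⟨d, hd⟩ := exists_ne (0 : E)
    have had : 0 ≤ a * ‖d‖ ^ 2 := by simpa [hgrad d] using hquad d 1
    exact nonneg_of_mul_nonneg_left had (by positivity)
  · rw [← add_sub_cancel x y, sphericalQuadratic_add, hcrit, inner_zero_left]
    linarith [mul_nonneg ha (sq_nonneg ‖y - x‖)]

theorem convex_range_sphericalQuadratic {κ : Type*} [Fintype κ]
    (hdim : (Fintype.card κ : Cardinal) ≤ Module.rank ℝ E) (a : κ → ℝ) (b : κ → E) (c : κ → ℝ) :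
    Convex ℝ (range fun x k => sphericalQuadratic (a k) (b k) (c k) x) := by
  have hF : (fun x k => sphericalQuadratic (a k) (b k) (c k) x) =
      fun x => ‖x‖ ^ 2 • a + LinearMap.pi (fun k => (2 : ℝ) • innerₗ E (b k)) x + c := by
    ext x k
    simp [sphericalQuadratic, mul_comm]
  rw [hF]
  exact convex_range_norm_sq_smul_add (by rwa [finrank_fintype_fun_eq_card]) _ _ _

theorem convex_range_option_elim_sphericalQuadratic [Fintype ι]
    (hdim : (Fintype.card ι : Cardinal) < Module.rank ℝ E)
    (aJ : ℝ) (bJ : E) (cJ : ℝ) (a : ι → ℝ) (b : ι → E) (c : ι → ℝ) :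
    Convex ℝ (range fun x (o : Option ι) =>
      o.elim (sphericalQuadratic aJ bJ cJ x) fun k => sphericalQuadratic (a k) (b k) (c k) x) := by
  have hdim' : (Fintype.card (Option ι) : Cardinal) ≤ Module.rank ℝ E := by
    rw [Fintype.card_option, Nat.cast_add_one]
    exact Cardinal.add_one_le_of_lt hdim
  convert convex_range_sphericalQuadratic hdim' (fun o => o.elim aJ a) (fun o => o.elim bJ b)
    (fun o => o.elim cJ c) using 4 with x o
  cases o <;> rfl

theorem stmt_6_general [Fintype ι] (hdim : (Fintype.card ι : Cardinal) < Module.rank ℝ E)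
    (aJ : ℝ) (bJ : E) (cJ : ℝ) (a : ι → ℝ) (b : ι → E) (c : ι → ℝ)
    (hslater : ∃ x₀, ∀ k, sphericalQuadratic (a k) (b k) (c k) x₀ < 0)
    (x : E) (hfeas : ∀ k, sphericalQuadratic (a k) (b k) (c k) x ≤ 0) :
    IsMinOn (sphericalQuadratic aJ bJ cJ)
        {y | ∀ k, sphericalQuadratic (a k) (b k) (c k) y ≤ 0} x ↔
      ∃ γ : ι → ℝ, (∀ k, 0 ≤ γ k) ∧
        (aJ + ∑ k, γ k * a k) • x + (bJ + ∑ k, γ k • b k) = 0 ∧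
        (∀ k, γ k * sphericalQuadratic (a k) (b k) (c k) x = 0) ∧
        0 ≤ aJ + ∑ k, γ k * a k := by
  have : Nontrivial E := rank_pos_iff_nontrivial.1 (bot_le.trans_lt hdim)
  have hlagrangian (γ : ι → ℝ) := funext (sphericalQuadratic_add_sum aJ bJ cJ a b c γ)
  constructor
  · intro hmin
    have hconv := convex_range_option_elim_sphericalQuadratic hdim aJ bJ cJ a b c
    obtain ⟨γ, hγ, hcompl, hmin_lag⟩ :=
      exists_isMinOn_lagrangian_of_isMinOn hconv hslater hfeas hmin
    rw [hlagrangian, isMinOn_univ_sphericalQuadratic_iff] at hmin_lag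
    exact ⟨γ, hγ, hmin_lag.1, hcompl, hmin_lag.2⟩
  · rintro ⟨γ, hγ, hcrit, hcompl, hcurv⟩
    refine isMinOn_of_isMinOn_lagrangian hγ hcompl ?_
    rw [hlagrangian]
    exact isMinOn_univ_sphericalQuadratic_iff.2 ⟨hcrit, hcurv⟩

end SphericalQuadratic

/-- KKT characterization of global minimizers for S-QCQP with `m + 1 < n`,
assuming a global minimizer exists, a nonzero nonnegative `γ'` with
`a_J + ∑ γ'_k a_k ≥ 0`, and the Slater condition. -/
theorem stmt_6 (n m : ℕ) (hmn : m + 1 < n)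
    (aJ : ℝ) (a : Fin m → ℝ) (bJ : Fin n → ℝ) (b : Fin m → Fin n → ℝ)
    (cJ : ℝ) (c : Fin m → ℝ)
    (J : (Fin n → ℝ) → ℝ) (f : Fin m → (Fin n → ℝ) → ℝ)
    (hJ : ∀ x, J x = aJ * (x ⬝ᵥ x) + 2 * (bJ ⬝ᵥ x) + cJ)
    (hf : ∀ k x, f k x = a k * (x ⬝ᵥ x) + 2 * (b k ⬝ᵥ x) + c k)
    (hexists : ∃ z : Fin n → ℝ, (∀ k, f k z ≤ 0) ∧
      ∀ x : Fin n → ℝ, (∀ k, f k x ≤ 0) → J z ≤ J x)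
    (hγ' : ∃ γ' : Fin m → ℝ, (∀ k, 0 ≤ γ' k) ∧ γ' ≠ 0 ∧ 0 ≤ aJ + ∑ k, γ' k * a k)
    (hslater : ∃ x₀ : Fin n → ℝ, ∀ k, f k x₀ < 0)
    (xstar : Fin n → ℝ) (hfeas : ∀ k, f k xstar ≤ 0) :
    (∀ x : Fin n → ℝ, (∀ k, f k x ≤ 0) → J xstar ≤ J x) ↔
      ∃ γ : Fin m → ℝ, (∀ k, 0 ≤ γ k) ∧
        (aJ + ∑ k, γ k * a k) • xstar + (bJ + ∑ k, γ k • b k) = 0 ∧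
        (∀ k, γ k * f k xstar = 0) ∧
        0 ≤ aJ + ∑ k, γ k * a k := by
  have hdim : (Fintype.card (Fin m) : Cardinal) < Module.rank ℝ (EuclideanSpace ℝ (Fin n)) := by
    rw [← finrank_eq_rank, finrank_euclideanSpace_fin, Fintype.card_fin]
    exact_mod_cast m.lt_succ_self.trans hmn
  simp only [hf, hJ, ← sphericalQuadratic_toLp] at hslater hfeas ⊢
  have hiff := stmt_6_general hdim aJ (WithLp.toLp 2 bJ) cJ a (fun k => WithLp.toLp 2 (b k)) c
    (hslater.imp' (WithLp.toLp 2) fun _ => id) (WithLp.toLp 2 xstar) hfeas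
  simpa only [isMinOn_iff, mem_ofPred_eq, (WithLp.equiv 2 (Fin n → ℝ)).forall_congr_left,
    WithLp.equiv_symm_apply, ← WithLp.toLp_smul, ← WithLp.toLp_sum, ← WithLp.toLp_add,
    WithLp.toLp_eq_zero] using hiff
end
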